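/- Let n ≥ m ≥ r ≥ 1 be integers. There exists a constant c = c(m, n, r) > 0 such that for all real H ≥ 1 the number of m×n matrices with all entries in E(H) and of rank exactly r is at least c·H^{nr}. -/

import Mathlib

/-- The set of Egyptian (unit) fractions `1/a` with `a` a nonzero integer, `|a| ≤ H`. -/
def Egyptian (H : ℝ) : Set ℚ := {x : ℚ | ∃ a : ℤ, a ≠ 0 ∧ (|a| : ℝ) ≤ H ∧ x = 1 / (a : ℚ)}

/-! Every integer congruent to `±1` modulo `3` is its own inverse modulo `3`. Hence, if the
denominators of an `r × n` matrix of unit fractions are congruent modulo `3` to a sign matrix whose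
leading `r × r` minor is a power of `2`, then the leading minor of the matrix of fractions is a
`3`-adic unit, in particular nonzero, and the rank is `r`. Each of the `n * r` denominators can be
chosen in at least `H / 3` ways, and repeating rows turns these matrices into `m × n` matrices of
rank `r`. -/

open Finset Matrix

section Rank

variable {l m n K : Type*} [Field K]

theorem rank_submatrix_of_surjective [Finite l] [Finite m] [Fintype n] (A : Matrix m n K)
    {f : l → m} (hf : f.Surjective) : (A.submatrix f id).rank = A.rank := by
  rw [rank_eq_finrank_span_row, rank_eq_finrank_span_row]
  exact congrArg (fun s ↦ Module.finrank K (Submodule.span K s)) (hf.range_comp A.row)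

theorem rank_eq_card_of_det_submatrix_ne_zero [Fintype m] [DecidableEq m] [Fintype n]
    {A : Matrix m n K} (f : m → n) (hA : (A.submatrix id f).det ≠ 0) :
    A.rank = Fintype.card m := by
  have hrows : LinearIndependent K A.row :=
    .of_comp (LinearMap.funLeft K K f) (linearIndependent_rows_of_det_ne_zero hA)
  exact hrows.rank_matrix

end Rank

section Reciprocals

variable {m n R K L : Type*} [Fintype m] [Fintype n] [DecidableEq m] [DecidableEq n]
  [CommRing R] [Field K] [Field L]

/-- The matrix of entrywise reciprocals of `A`, multiplied by the product of all entries of `A` so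
that it has entries in the base ring. It transfers statements about reciprocals between fields. -/
def clearedReciprocals (A : Matrix m n R) : Matrix m n R :=
  of fun i j ↦ ∏ p ∈ univ.erase (i, j), A p.1 p.2

theorem map_clearedReciprocals (f : R →+* K) {A : Matrix m n R} (hA : ∀ i j, f (A i j) ≠ 0) :
    (clearedReciprocals A).map f = f (∏ p : m × n, A p.1 p.2) • A.map fun a ↦ (f a)⁻¹ := by
  ext i j
  have hprod : A i j * clearedReciprocals A i j = ∏ p : m × n, A p.1 p.2 :=
    mul_prod_erase univ (fun p ↦ A p.1 p.2) (mem_univ (i, j))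
  simp only [map_apply, Matrix.smul_apply, smul_eq_mul]
  rw [← hprod, map_mul, mul_right_comm, mul_inv_cancel₀ (hA i j), one_mul]

theorem det_map_inv_ne_zero_iff (f : R →+* K) {A : Matrix m m R} (hA : ∀ i j, f (A i j) ≠ 0) :
    (A.map fun a ↦ (f a)⁻¹).det ≠ 0 ↔ f (clearedReciprocals A).det ≠ 0 := by
  have hprod : f (∏ p : m × m, A p.1 p.2) ≠ 0 := by
    rw [map_prod]
    exact prod_ne_zero_iff.mpr fun p _ ↦ hA p.1 p.2
  rw [f.map_det, RingHom.mapMatrix_apply, map_clearedReciprocals f hA, det_smul]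
  exact (mul_ne_zero_iff_left (pow_ne_zero _ hprod)).symm

theorem det_map_inv_ne_zero_of_injective (f : R →+* K) {g : R →+* L} (hg : Function.Injective g)
    {A : Matrix m m R} (hA : ∀ i j, f (A i j) ≠ 0) (hdet : (A.map fun a ↦ (f a)⁻¹).det ≠ 0) :
    (A.map fun a ↦ (g a)⁻¹).det ≠ 0 := by
  have hgA : ∀ i j, g (A i j) ≠ 0 := fun i j ↦
    (map_ne_zero_iff g hg).mpr (ne_zero_of_map (hA i j))
  rw [det_map_inv_ne_zero_iff f hA] at hdet
  rw [det_map_inv_ne_zero_iff g hgA]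
  exact (map_ne_zero_iff g hg).mpr (ne_zero_of_map hdet)

end Reciprocals

section SignMatrix

/-- The `r × n` matrix with entries `-1` strictly below the diagonal and `1` elsewhere, which
prescribes the residues modulo `3` of the denominators. -/
def signMatrix (r n : ℕ) : Matrix (Fin r) (Fin n) ℤ :=
  of fun i j ↦ if (j : ℕ) < i then -1 else 1

theorem det_signMatrix (r : ℕ) : (signMatrix r r).det = 2 ^ (r - 1) := by
  obtain _ | r := r
  · rw [det_isEmpty, zero_tsub, pow_zero]
  -- Subtracting from each column the preceding one leaves a lower triangular matrix.
  let B : Matrix (Fin (r + 1)) (Fin (r + 1)) ℤ :=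
    of fun i ↦ Fin.cons (signMatrix (r + 1) (r + 1) i 0) fun j ↦ if i = j.succ then 2 else 0
  have hdet : (signMatrix (r + 1) (r + 1)).det = B.det := by
    refine det_eq_of_forall_col_eq_smul_add_pred (fun _ ↦ 1) (fun i ↦ rfl) fun i j ↦ ?_
    simp only [B, signMatrix, of_apply, Fin.cons_succ, Fin.ext_iff, Fin.val_succ,
      Fin.val_castSucc]
    split_ifs <;> omega
  have htri : B.IsLowerTriangular := by
    intro i j (hij : i < j)
    obtain ⟨k, rfl⟩ := Fin.exists_succ_eq.mpr (Fin.ne_zero_of_lt hij)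
    simp [B, hij.ne]
  rw [hdet, det_of_isLowerTriangular B htri]
  simp [B, signMatrix, Fin.prod_univ_succ]

end SignMatrix

section Counting

theorem sub_lt_mul_card_filter_modEq_add_one (a b : ℤ) {d : ℤ} (hd : 0 < d) (v : ℤ) :
    b - a < d * (#{x ∈ Ioc a b | x ≡ v [ZMOD d]} + 1) := by
  have hdQ : (0 : ℚ) < d := by exact_mod_cast hd
  have hcard : ⌊(b - v) / (d : ℚ)⌋ - ⌊(a - v) / (d : ℚ)⌋ ≤ #{x ∈ Ioc a b | x ≡ v [ZMOD d]} :=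
    (Int.Ioc_filter_modEq_card a b hd v).symm ▸ le_max_left _ _
  have hlt : (b - v) / (d : ℚ) - (a - v) / d < #{x ∈ Ioc a b | x ≡ v [ZMOD d]} + 1 := by
    have hb := Int.lt_floor_add_one ((b - v) / (d : ℚ))
    have ha := Int.floor_le ((a - v) / (d : ℚ))
    have hcardQ : (⌊(b - v) / (d : ℚ)⌋ - ⌊(a - v) / (d : ℚ)⌋ : ℚ) ≤
        #{x ∈ Ioc a b | x ≡ v [ZMOD d]} := by exact_mod_cast hcard
    linarith
  rw [← sub_div, sub_sub_sub_cancel_right, div_lt_iff₀' hdQ] at hlt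
  exact_mod_cast hlt

theorem div_three_le_card_filter_modEq {H : ℝ} (hH : 1 ≤ H) (v : ℤ) :
    H / 3 ≤ #{a ∈ Icc (-⌊H⌋) ⌊H⌋ | a ≡ v [ZMOD 3]} := by
  have hfloor : 1 ≤ ⌊H⌋ := Int.le_floor.mpr (by exact_mod_cast hH)
  have hcard := sub_lt_mul_card_filter_modEq_add_one (-⌊H⌋ - 1) ⌊H⌋ three_pos v
  have hIoc : Ioc (-⌊H⌋ - 1) ⌊H⌋ = Icc (-⌊H⌋) ⌊H⌋ := by
    ext a
    simp only [mem_Ioc, mem_Icc, Int.sub_one_lt_iff]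
  rw [hIoc] at hcard
  have hle : ⌊H⌋ + 1 ≤ 3 * (#{a ∈ Icc (-⌊H⌋) ⌊H⌋ | a ≡ v [ZMOD 3]} : ℤ) := by omega
  have hleR : (⌊H⌋ + 1 : ℝ) ≤ 3 * #{a ∈ Icc (-⌊H⌋) ⌊H⌋ | a ≡ v [ZMOD 3]} := by exact_mod_cast hle
  linarith [Int.lt_floor_add_one H]

theorem pow_card_mul_card_le_ncard_matrix {m n α : Type*} [Fintype m] [Fintype n]
    {s : m → n → Finset α} {c : ℝ} (hc : 0 ≤ c) (hs : ∀ i j, c ≤ #(s i j)) :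
    c ^ (Fintype.card n * Fintype.card m) ≤
      Set.ncard {A : Matrix m n α | ∀ i j, A i j ∈ s i j} := by
  classical
  let T : Finset (Matrix m n α) := Fintype.piFinset fun i ↦ Fintype.piFinset (s i)
  have hT : {A : Matrix m n α | ∀ i j, A i j ∈ s i j} = T := by
    ext A
    exact (Fintype.mem_piFinset.trans <| forall_congr' fun i ↦ Fintype.mem_piFinset).symm
  have hcard : #T = ∏ i, ∏ j, #(s i j) :=
    (Fintype.card_piFinset _).trans (prod_congr rfl fun i _ ↦ Fintype.card_piFinset (s i))
  calc c ^ (Fintype.card n * Fintype.card m) = ∏ _i : m, ∏ _j : n, c := by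
        simp only [prod_const, card_univ, pow_mul]
    _ ≤ ∏ i, ∏ j, (#(s i j) : ℝ) := by gcongr with i _ j _; exact hs i j
    _ = Set.ncard {A : Matrix m n α | ∀ i j, A i j ∈ s i j} := by
        rw [hT, Set.ncard_coe_finset, hcard]
        simp only [Nat.cast_prod]

end Counting

section Denominators

/-- The integer matrices with entries of absolute value at most `H` that are congruent to the sign
matrix modulo `3`; they serve as matrices of denominators of unit fractions. -/
def denominatorMatrices (H : ℝ) (r n : ℕ) : Set (Matrix (Fin r) (Fin n) ℤ) :=
  {A | ∀ i j, (|A i j| : ℝ) ≤ H ∧ A i j ≡ signMatrix r n i j [ZMOD 3]}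

variable {H : ℝ} {n r : ℕ} {A : Matrix (Fin r) (Fin n) ℤ}

theorem div_three_pow_le_ncard_denominatorMatrices (hH : 1 ≤ H) (r n : ℕ) :
    (H / 3) ^ (n * r) ≤ (denominatorMatrices H r n).ncard := by
  have hcard := pow_card_mul_card_le_ncard_matrix (by positivity) fun i j ↦
    div_three_le_card_filter_modEq hH (signMatrix r n i j)
  simpa only [Fintype.card_fin, denominatorMatrices, mem_filter, mem_Icc, ← abs_le,
    ← Int.cast_abs, ← Int.le_floor] using hcard

theorem intCast_zmod_three_eq_of_mem (hA : A ∈ denominatorMatrices H r n) (i : Fin r) (j : Fin n) :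
    (A i j : ZMod 3) = signMatrix r n i j :=
  (ZMod.intCast_eq_intCast_iff _ _ 3).mpr (hA i j).2

theorem intCast_zmod_three_ne_zero_of_mem (hA : A ∈ denominatorMatrices H r n) (i : Fin r)
    (j : Fin n) : (A i j : ZMod 3) ≠ 0 := by
  rw [intCast_zmod_three_eq_of_mem hA]
  simp only [signMatrix, of_apply]
  split_ifs <;> decide

theorem inv_mem_egyptian_of_mem (hA : A ∈ denominatorMatrices H r n) (i : Fin r) (j : Fin n) :
    (A i j : ℚ)⁻¹ ∈ Egyptian H := by
  refine ⟨A i j, fun h ↦ ?_, (hA i j).1, (one_div _).symm⟩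
  exact intCast_zmod_three_ne_zero_of_mem hA i j (by rw [h, Int.cast_zero])

theorem map_inv_zmod_three_of_mem (hA : A ∈ denominatorMatrices H r n) :
    (A.map fun a ↦ (a : ZMod 3)⁻¹) = (signMatrix r n).map (Int.castRingHom (ZMod 3)) := by
  ext i j
  simp only [map_apply, intCast_zmod_three_eq_of_mem hA, signMatrix, of_apply, eq_intCast]
  split_ifs
  · rw [Int.cast_neg, Int.cast_one, inv_neg, inv_one]
  · rw [Int.cast_one, inv_one]

theorem det_map_inv_submatrix_ne_zero_of_mem (hrn : r ≤ n) (hA : A ∈ denominatorMatrices H r n) :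
    ((A.map fun a ↦ (a : ℚ)⁻¹).submatrix id (Fin.castLE hrn)).det ≠ 0 := by
  let A₀ : Matrix (Fin r) (Fin r) ℤ := A.submatrix id (Fin.castLE hrn)
  have hA₀ : A₀ ∈ denominatorMatrices H r r := fun i j ↦ hA i (Fin.castLE hrn j)
  have hdet : (A₀.map fun a ↦ (a : ZMod 3)⁻¹).det ≠ 0 := by
    rw [map_inv_zmod_three_of_mem hA₀, ← RingHom.mapMatrix_apply, ← RingHom.map_det,
      det_signMatrix, map_pow]
    exact pow_ne_zero _ (show (2 : ZMod 3) ≠ 0 by decide)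
  exact det_map_inv_ne_zero_of_injective (Int.castRingHom (ZMod 3)) (g := Int.castRingHom ℚ)
    Int.cast_injective (intCast_zmod_three_ne_zero_of_mem hA₀) hdet

theorem rank_map_inv_of_mem (hrn : r ≤ n) (hA : A ∈ denominatorMatrices H r n) :
    (A.map fun a ↦ (a : ℚ)⁻¹).rank = r :=
  (rank_eq_card_of_det_submatrix_ne_zero _ (det_map_inv_submatrix_ne_zero_of_mem hrn hA)).trans
    (Fintype.card_fin r)

end Denominators

theorem egyptian_finite (H : ℝ) : (Egyptian H).Finite := by
  refine ((Set.finite_Icc (-⌊H⌋) ⌊H⌋).image fun a : ℤ ↦ 1 / (a : ℚ)).subset ?_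
  rintro x ⟨a, -, ha, rfl⟩
  exact ⟨a, abs_le.mp (Int.le_floor.mpr (by exact_mod_cast ha)), rfl⟩

theorem finite_matrix {m n α : Type*} [Finite m] [Finite n] {s : Set α} (hs : s.Finite) :
    (s.matrix : Set (Matrix m n α)).Finite :=
  .pi' fun _ ↦ .pi' fun _ ↦ hs

theorem stmt11_general {m n r : ℕ} (hr : 1 ≤ r) (hrm : r ≤ m) (hrn : r ≤ n) {H : ℝ} (hH : 1 ≤ H) :
    (H / 3) ^ (n * r) ≤
      (Set.ncard {A : Matrix (Fin m) (Fin n) ℚ |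
        (∀ i j, A i j ∈ Egyptian H) ∧ A.rank = r} : ℝ) := by
  have : Nonempty (Fin r) := ⟨0, hr⟩
  obtain ⟨f, hf⟩ : ∃ f : Fin m → Fin r, f.Surjective :=
    ⟨_, Function.invFun_surjective (Fin.castLE_injective hrm)⟩
  let F (A : Matrix (Fin r) (Fin n) ℤ) : Matrix (Fin m) (Fin n) ℚ :=
    (A.map fun a ↦ (a : ℚ)⁻¹).submatrix f id
  have hF : F.Injective := by
    intro A B h
    ext i j
    obtain ⟨k, rfl⟩ := hf i
    exact Int.cast_injective (inv_injective (congrFun₂ h k j))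
  have hmaps : Set.MapsTo F (denominatorMatrices H r n)
      {A | (∀ i j, A i j ∈ Egyptian H) ∧ A.rank = r} := fun A hA ↦
    ⟨fun i j ↦ inv_mem_egyptian_of_mem hA (f i) j,
      (rank_submatrix_of_surjective _ hf).trans (rank_map_inv_of_mem hrn hA)⟩
  have hcard := Set.ncard_le_ncard_of_injOn F hmaps hF.injOn <|
    (finite_matrix (egyptian_finite H)).subset fun A hA ↦ hA.1
  exact (div_three_pow_le_ncard_denominatorMatrices hH r n).trans (by exact_mod_cast hcard)

theorem stmt11 (m n r : ℕ) (hnm : n ≥ m) (hmr : m ≥ r) (hr : r ≥ 1) :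
    ∃ c : ℝ, c > 0 ∧ ∀ H : ℝ, H ≥ 1 →
      c * H ^ ((n * r : ℕ) : ℝ) ≤
        (Set.ncard {A : Matrix (Fin m) (Fin n) ℚ |
            (∀ i j, A i j ∈ Egyptian H) ∧ A.rank = r} : ℝ) := by
  refine ⟨(1 / 3) ^ (n * r), by positivity, fun H hH ↦ ?_⟩
  rw [Real.rpow_natCast, ← mul_pow, one_div_mul_eq_div]
  exact stmt11_general hr hmr (hmr.trans hnm) hH
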